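/- Let X be a metric space equipped with Carathéodory's construction from an admissible gauge ζ on the Borel sets, producing the measure ψ. For each n ∈ ℕ let μ_n be a Borel measure on X. Suppose A ⊂ { x ∈ X : lim_{δ→0⁺} limsup_{n→∞} ( sup_{0<ρ<δ} μ_n(B_ρ(x))/ζ(B_ρ(x)) ) > 0 }, and assume there exists an open set Ω containing A such that Σ_{n=1}^∞ μ_n(Ω) < ∞. Then ψ(A) = 0. -/

import Mathlib

open MeasureTheory Metric Filter Set
open scoped ENNReal Topology

/-- The approximating measure `φ_δ` of Carathéodory's construction from the gauge `ζ`
and the family of all Borel subsets. -/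
noncomputable def caraPre {X : Type*} [MetricSpace X] [MeasurableSpace X]
    (ζ : Set X → ℝ≥0∞) (δ : ℝ) (A : Set X) : ℝ≥0∞ :=
  ⨅ (G : Set (Set X)) (_ : G.Countable) (_ : ∀ S ∈ G, MeasurableSet S)
    (_ : ∀ S ∈ G, EMetric.diam S ≤ ENNReal.ofReal δ) (_ : A ⊆ ⋃₀ G),
    ∑' S : G, ζ S.1

/-- The resulting measure `ψ = sup_{δ>0} φ_δ` of Carathéodory's construction. -/
noncomputable def caraMeas {X : Type*} [MetricSpace X] [MeasurableSpace X]
    (ζ : Set X → ℝ≥0∞) (A : Set X) : ℝ≥0∞ :=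
  ⨆ (δ : ℝ) (_ : 0 < δ), caraPre ζ δ A

/-!
If `x ∈ A` then, for infinitely many `n`, some arbitrarily small ball `B` about `x` satisfies
`ζ (τ B) ≤ K * μ n B`, where `K` exceeds the ratio of the doubling constant to the density at `x`.
Integer values of `K` suffice, so `A` is a countable union of sets on which `K` is constant.
For fixed `K` and any `N`, such balls with `n ≥ N` give a fine cover of `A` inside `Ω`. Vitali's
covering theorem extracts a disjoint subfamily whose enlargements cover `A`, so that
`φ_δ(A) ≤ K * ∑ n ≥ N, μ n Ω`, a tail of a convergent series.
-/

section Caratheodory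

variable {X : Type*} [MetricSpace X] [MeasurableSpace X] {ζ : Set X → ℝ≥0∞} {δ : ℝ}

theorem caraPre_le_tsum {ι : Type*} [Countable ι] {A : Set X} {S : ι → Set X}
    (hmeas : ∀ i, MeasurableSet (S i)) (hdiam : ∀ i, ediam (S i) ≤ ENNReal.ofReal δ)
    (hcover : A ⊆ ⋃ i, S i) : caraPre ζ δ A ≤ ∑' i, ζ (S i) :=
  calc caraPre ζ δ A ≤ ∑' T : range S, ζ T :=
        iInf_le_of_le (range S) <| iInf_le_of_le (countable_range S) <|
          iInf_le_of_le (forall_mem_range.2 hmeas) <| iInf_le_of_le (forall_mem_range.2 hdiam) <|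
          iInf_le _ (hcover.trans_eq (sUnion_range S).symm)
    _ ≤ ∑' i, ζ (S i) :=
        ENNReal.tsum_le_tsum_comp_of_surjective rangeFactorization_surjective fun T : range S ↦ ζ T

theorem exists_cover_of_caraPre_lt {A : Set X} {a : ℝ≥0∞} (h : caraPre ζ δ A < a) :
    ∃ G : Set (Set X), G.Countable ∧ (∀ S ∈ G, MeasurableSet S) ∧
      (∀ S ∈ G, ediam S ≤ ENNReal.ofReal δ) ∧ A ⊆ ⋃₀ G ∧ ∑' S : G, ζ S < a := by
  simp only [caraPre, iInf_lt_iff, exists_prop] at h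
  exact h

theorem caraPre_mono {A B : Set X} (h : A ⊆ B) : caraPre ζ δ A ≤ caraPre ζ δ B := by
  refine le_of_forall_gt fun a ha ↦ ?_
  obtain ⟨G, hcount, hmeas, hdiam, hcover, hsum⟩ := exists_cover_of_caraPre_lt ha
  have := hcount.to_subtype
  rw [sUnion_eq_iUnion] at hcover
  exact (caraPre_le_tsum (fun S : G ↦ hmeas S S.2) (fun S ↦ hdiam S S.2)
    (h.trans hcover)).trans_lt hsum

theorem caraPre_iUnion_le {ι : Type*} [Countable ι] (A : ι → Set X) :
    caraPre ζ δ (⋃ i, A i) ≤ ∑' i, caraPre ζ δ (A i) := by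
  refine ENNReal.le_of_forall_pos_le_add fun ε hε hfin ↦ ?_
  obtain ⟨e, he, hesum⟩ := ENNReal.exists_pos_sum_of_countable' (ENNReal.coe_pos.2 hε).ne' ι
  choose G hcount hmeas hdiam hcover hsum using fun i ↦ exists_cover_of_caraPre_lt
    (ENNReal.lt_add_right (ENNReal.ne_top_of_tsum_ne_top hfin.ne i) (he i).ne')
  have := fun i ↦ (hcount i).to_subtype
  calc caraPre ζ δ (⋃ i, A i) ≤ ∑' p : Σ i, G i, ζ p.2 := by
        refine caraPre_le_tsum (fun p ↦ hmeas p.1 p.2 p.2.2) (fun p ↦ hdiam p.1 p.2 p.2.2) ?_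
        refine iUnion_subset fun i x hx ↦ ?_
        obtain ⟨S, hS, hxS⟩ := hcover i hx
        exact mem_iUnion.2 ⟨⟨i, S, hS⟩, hxS⟩
    _ = ∑' i, ∑' S : G i, ζ S := ENNReal.tsum_sigma' _
    _ ≤ ∑' i, (caraPre ζ δ (A i) + e i) := ENNReal.tsum_le_tsum fun i ↦ (hsum i).le
    _ = ∑' i, caraPre ζ δ (A i) + ∑' i, e i := ENNReal.tsum_add
    _ ≤ ∑' i, caraPre ζ δ (A i) + ε := by gcongr

theorem caraMeas_eq_zero_iff {A : Set X} : caraMeas ζ A = 0 ↔ ∀ δ > 0, caraPre ζ δ A = 0 := by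
  simp only [caraMeas, ENNReal.iSup_eq_zero, gt_iff_lt]

theorem caraMeas_eq_zero_of_subset_iUnion {ι : Type*} [Countable ι] {A : Set X} {S : ι → Set X}
    (hA : A ⊆ ⋃ i, S i) (hS : ∀ i, caraMeas ζ (S i) = 0) : caraMeas ζ A = 0 := by
  simp only [caraMeas_eq_zero_iff] at hS ⊢
  intro δ hδ
  refine nonpos_iff_eq_zero.1 <| ((caraPre_mono hA).trans (caraPre_iUnion_le S)).trans_eq ?_
  exact ENNReal.tsum_eq_zero.2 fun i ↦ hS i δ hδ

end Caratheodory

section Vitali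

theorem exists_countable_subfamily_covering_enlargement_closedBall {X ι : Type*}
    [PseudoMetricSpace X] [MeasurableSpace X] [OpensMeasurableSpace X] {ν : Measure X} {Ω : Set X}
    {x : ι → X} {ρ : ι → ℝ} {R τ : ℝ} (hρ : ∀ i, ρ i ≤ R) (hτ : 3 < τ) (hνΩ : ν Ω ≠ ∞)
    (hsub : ∀ i, closedBall (x i) (ρ i) ⊆ Ω) (hpos : ∀ i, 0 < ν (closedBall (x i) (ρ i))) :
    ∃ u : Set ι, u.Countable ∧
      (∀ i, ∃ j ∈ u, closedBall (x i) (ρ i) ⊆ closedBall (x j) (τ * ρ j)) ∧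
      ∑' i : u, ν (closedBall (x i) (ρ i)) ≤ ν Ω := by
  obtain ⟨u, -, hdisj, hcover⟩ := Vitali.exists_disjoint_subfamily_covering_enlargement_closedBall
    univ x ρ R (fun i _ ↦ hρ i) τ hτ
  have hmeas (i : u) : MeasurableSet (closedBall (x i) (ρ i)) := measurableSet_closedBall
  have hdisj' : Pairwise (Function.onFun Disjoint fun i : u ↦ closedBall (x i) (ρ i)) :=
    (pairwise_subtype_iff_pairwise_set u _).2 hdisj
  have hunion : ν (⋃ i : u, closedBall (x i) (ρ i)) ≤ ν Ω :=
    measure_mono (iUnion_subset fun i ↦ hsub i)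
  refine ⟨u, ?_, fun i ↦ hcover i (mem_univ i),
    (tsum_meas_le_meas_iUnion_of_disjoint ν hmeas hdisj').trans hunion⟩
  have hcount := Measure.countable_meas_pos_of_disjoint_of_meas_iUnion_ne_top ν hmeas hdisj'
    (ne_top_of_le_ne_top hνΩ hunion)
  exact countable_coe_iff.1 <| countable_univ_iff.1 <| hcount.mono fun i _ ↦ hpos i

variable {X : Type*} [MetricSpace X] [MeasurableSpace X] [OpensMeasurableSpace X]
  {ζ : Set X → ℝ≥0∞} {A Ω : Set X} {K : ℝ≥0∞} {τ : ℝ}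

theorem caraPre_le_mul_measure {ν : Measure X} {δ : ℝ} (hτ : 3 < τ) (hνΩ : ν Ω ≠ ∞)
    (hA : ∀ x ∈ A, ∃ ρ, 0 < ρ ∧ 2 * (τ * ρ) ≤ δ ∧ closedBall x ρ ⊆ Ω ∧
      0 < ν (closedBall x ρ) ∧ ζ (closedBall x (τ * ρ)) ≤ K * ν (closedBall x ρ)) :
    caraPre ζ δ A ≤ K * ν Ω := by
  have : 0 < τ := by linarith
  choose! ρ hρ0 hρδ hsub hpos hζ using hA
  have hρ (x : A) : ρ x ≤ δ / (2 * τ) := by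
    rw [le_div_iff₀' (by positivity), mul_assoc]
    exact hρδ x x.2
  obtain ⟨u, hu, hcover, hsum⟩ := exists_countable_subfamily_covering_enlargement_closedBall
    hρ hτ hνΩ (fun x ↦ hsub x x.2) (fun x ↦ hpos x x.2)
  have hdiam (x : u) : ediam (closedBall x.1.1 (τ * ρ x)) ≤ ENNReal.ofReal δ := by
    refine ediam_le_of_forall_dist_le fun y hy z hz ↦ ?_
    have := dist_triangle_right y z x.1.1
    linarith [mem_closedBall.1 hy, mem_closedBall.1 hz, hρδ x x.1.2]
  have := hu.to_subtype
  calc caraPre ζ δ A ≤ ∑' x : u, ζ (closedBall x (τ * ρ x)) := by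
        refine caraPre_le_tsum (fun _ ↦ measurableSet_closedBall) hdiam fun x hx ↦ ?_
        obtain ⟨y, hy, hxy⟩ := hcover ⟨x, hx⟩
        exact mem_iUnion.2 ⟨⟨y, hy⟩, hxy (mem_closedBall_self (hρ0 x hx).le)⟩
    _ ≤ ∑' x : u, K * ν (closedBall x (ρ x)) := ENNReal.tsum_le_tsum fun x ↦ hζ x x.1.2
    _ = K * ∑' x : u, ν (closedBall x (ρ x)) := ENNReal.tsum_mul_left
    _ ≤ K * ν Ω := by gcongr

theorem caraMeas_eq_zero_of_frequently {μ : ℕ → Measure X} (hτ : 3 < τ) (hK : K ≠ ∞)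
    (hΩ : IsOpen Ω) (hAΩ : A ⊆ Ω) (hsum : ∑' n, μ n Ω ≠ ∞)
    (hA : ∀ x ∈ A, ∀ δ > 0, ∃ᶠ n in atTop, ∃ ρ, 0 < ρ ∧ ρ < δ ∧
      0 < μ n (closedBall x ρ) ∧ ζ (closedBall x (τ * ρ)) ≤ K * μ n (closedBall x ρ)) :
    caraMeas ζ A = 0 := by
  have : 0 < τ := by linarith
  refine caraMeas_eq_zero_iff.2 fun δ hδ ↦ ?_
  have hbound (N : ℕ) : caraPre ζ δ A ≤ K * ∑' n, μ (n + N) Ω := by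
    let ν : Measure X := Measure.sum fun n ↦ μ (n + N)
    have hνΩ : ν Ω = ∑' n, μ (n + N) Ω := Measure.sum_apply _ hΩ.measurableSet
    have hνfin : ν Ω ≠ ∞ := hνΩ ▸ ne_top_of_le_ne_top hsum
      (ENNReal.tsum_comp_le_tsum_of_injective (add_left_injective N) fun n ↦ μ n Ω)
    rw [← hνΩ]
    refine caraPre_le_mul_measure hτ hνfin fun x hx ↦ ?_
    obtain ⟨r, hr, hrΩ⟩ := nhds_basis_closedBall.mem_iff.1 (hΩ.mem_nhds (hAΩ hx))
    obtain ⟨n, hn, ρ, hρ0, hρ, hpos, hζ⟩ :=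
      frequently_atTop.1 (hA x hx (min r (δ / (2 * τ))) (by positivity)) N
    obtain ⟨hρr, hρδ⟩ := lt_min_iff.1 hρ
    have hμν : μ n (closedBall x ρ) ≤ ν (closedBall x ρ) := by
      simpa only [Nat.sub_add_cancel hn] using Measure.le_sum (fun n ↦ μ (n + N)) (n - N) _
    refine ⟨ρ, hρ0, ?_, (closedBall_subset_closedBall hρr.le).trans hrΩ, hpos.trans_le hμν,
      hζ.trans (by gcongr)⟩
    rw [← mul_assoc, ← le_div_iff₀' (by positivity)]
    exact hρδ.le
  have htail : Tendsto (fun N ↦ K * ∑' n, μ (n + N) Ω) atTop (𝓝 0) := by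
    simpa only [mul_zero] using
      ENNReal.Tendsto.const_mul (ENNReal.tendsto_sum_nat_add _ hsum) (Or.inr hK)
  exact nonpos_iff_eq_zero.1 (ge_of_tendsto' htail hbound)

end Vitali

section Density

variable {X : Type*} [MetricSpace X] [MeasurableSpace X] {ζ : Set X → ℝ≥0∞}
  {μ : ℕ → Measure X} {x : X}

/-- The upper density of the sequence `μ` with respect to the gauge `ζ` at `x`, that is
`lim_{δ→0⁺} limsup_n sup_{0<ρ<δ} μ_n(B_ρ(x)) / ζ(B_ρ(x))`. The limit is encoded as an infimum, and
the quotient in `ℝ≥0∞` is `0` if `μ_n(B_ρ(x)) = 0` or `ζ(B_ρ(x)) = ∞`, and otherwise `∞` if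
`ζ(B_ρ(x)) = 0`. -/
noncomputable def limsupDensity (ζ : Set X → ℝ≥0∞) (μ : ℕ → Measure X) (x : X) : ℝ≥0∞ :=
  ⨅ (δ : ℝ) (_ : 0 < δ), limsup (fun n ↦
    ⨆ (ρ : ℝ) (_ : 0 < ρ) (_ : ρ < δ), μ n (closedBall x ρ) / ζ (closedBall x ρ)) atTop

theorem frequently_mul_lt_of_lt_limsupDensity {c : ℝ≥0∞} (hc : c < limsupDensity ζ μ x)
    {δ : ℝ} (hδ : 0 < δ) :
    ∃ᶠ n in atTop, ∃ ρ, 0 < ρ ∧ ρ < δ ∧ c * ζ (closedBall x ρ) < μ n (closedBall x ρ) := by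
  refine (frequently_lt_of_lt_limsup (by isBoundedDefault)
    (hc.trans_le (iInf₂_le δ hδ))).mono fun n hn ↦ ?_
  simp only [lt_iSup_iff] at hn
  obtain ⟨ρ, hρ0, hρδ, hlt⟩ := hn
  exact ⟨ρ, hρ0, hρδ, ENNReal.mul_lt_of_lt_div hlt⟩

theorem exists_frequently_le_mul_of_limsupDensity_pos {τ : ℝ} {C : ℝ≥0∞} (hC : C ≠ ∞)
    (hdbl : ∀ᶠ R in 𝓝[>] (0 : ℝ), ζ (closedBall x (τ * R)) ≤ C * ζ (closedBall x R))
    (hpos : 0 < limsupDensity ζ μ x) :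
    ∃ K : ℕ, ∀ δ > 0, ∃ᶠ n in atTop, ∃ ρ, 0 < ρ ∧ ρ < δ ∧
      0 < μ n (closedBall x ρ) ∧ ζ (closedBall x (τ * ρ)) ≤ K * μ n (closedBall x ρ) := by
  obtain ⟨c, hc0, hc⟩ := exists_between hpos
  obtain ⟨K, hK⟩ :=
    ENNReal.exists_nat_gt (ENNReal.mul_ne_top hC (ENNReal.inv_ne_top.2 hc0.ne'))
  obtain ⟨r, hr, hrdbl⟩ := mem_nhdsGT_iff_exists_Ioo_subset.1 hdbl
  refine ⟨K, fun δ hδ ↦ (frequently_mul_lt_of_lt_limsupDensity hc (lt_min hδ hr)).mono ?_⟩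
  rintro n ⟨ρ, hρ0, hρ, hlt⟩
  obtain ⟨hρδ, hρr⟩ := lt_min_iff.1 hρ
  refine ⟨ρ, hρ0, hρδ, bot_le.trans_lt hlt, ?_⟩
  calc ζ (closedBall x (τ * ρ)) ≤ C * ζ (closedBall x ρ) := hrdbl ⟨hρ0, hρr⟩
    _ ≤ C * (c⁻¹ * μ n (closedBall x ρ)) := by
        gcongr
        exact (ENNReal.mul_le_iff_le_inv hc0.ne' hc.ne_top).1 hlt.le
    _ = C * c⁻¹ * μ n (closedBall x ρ) := (mul_assoc ..).symm
    _ ≤ K * μ n (closedBall x ρ) := by gcongr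

end Density

theorem eventually_nhdsGT_zero_of_forall_ofReal_lt {a : ℝ≥0∞} (ha : 0 < a) {p : ℝ → Prop}
    (hp : ∀ R, 0 < R → ENNReal.ofReal R < a → p R) : ∀ᶠ R in 𝓝[>] 0, p R := by
  have hlt : ∀ᶠ R in 𝓝[>] (0 : ℝ), ENNReal.ofReal R < a := nhdsWithin_le_nhds <|
    (ENNReal.continuous_ofReal.tendsto' 0 0 ENNReal.ofReal_zero).eventually_lt_const ha
  filter_upwards [self_mem_nhdsWithin, hlt] with R using hp R

theorem statement6_general {X : Type*} [MetricSpace X] [MeasurableSpace X]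
    [OpensMeasurableSpace X] {ζ : Set X → ℝ≥0∞} {μ : ℕ → Measure X} {A Ω : Set X} {τ : ℝ}
    (hτ : 3 < τ)
    (hdbl : ∀ x ∈ A, ∃ C ≠ ∞, ∀ᶠ R in 𝓝[>] (0 : ℝ),
      ζ (closedBall x (τ * R)) ≤ C * ζ (closedBall x R))
    (hA : ∀ x ∈ A, 0 < limsupDensity ζ μ x)
    (hΩ : IsOpen Ω) (hAΩ : A ⊆ Ω) (hsum : ∑' n, μ n Ω ≠ ∞) :
    caraMeas ζ A = 0 := by
  choose! C hC hdbl using hdbl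
  choose! K hK using fun x hx ↦
    exists_frequently_le_mul_of_limsupDensity_pos (hC x hx) (hdbl x hx) (hA x hx)
  refine caraMeas_eq_zero_of_subset_iUnion (S := fun k ↦ {x ∈ A | K x = k})
    (fun x hx ↦ mem_iUnion.2 ⟨K x, hx, rfl⟩) fun k ↦ ?_
  refine caraMeas_eq_zero_of_frequently hτ (ENNReal.natCast_ne_top k) hΩ
    ((sep_subset _ _).trans hAΩ) hsum ?_
  rintro x ⟨hx, rfl⟩
  exact hK x hx

/-- A limsup-version density lemma: if `Σ_n μ_n(Ω) < ∞` for some open `Ω ⊇ A`, and at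
every point of `A` the quantity `lim_{δ→0⁺} limsup_n sup_{0<ρ<δ} μ_n(B_ρ(x))/ζ(B_ρ(x))`
is positive, then `ψ(A) = 0`. (The limit as `δ → 0⁺` is the infimum over `δ > 0`, by
monotonicity in `δ`.) -/
theorem statement6 {X : Type*} [MetricSpace X] [MeasurableSpace X] [BorelSpace X]
    (ζ : Set X → ℝ≥0∞) (I γ lam : ℝ≥0∞) (hI : 0 < I) (hγ : 0 < γ)
    (hlam : 0 < lam) (hlamtop : lam ≠ ⊤)
    (hζfin : ∀ (x : X) (R : ℝ), 0 < R → ENNReal.ofReal R < I →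
      0 < ζ (closedBall x R) ∧ ζ (closedBall x R) < ⊤)
    (hζdbl : ∀ (x : X) (R : ℝ), 0 < R → ENNReal.ofReal R < γ →
      ζ (closedBall x (5 * R)) ≤ lam * ζ (closedBall x R))
    (μ : ℕ → Measure X) (A : Set X)
    (hA : A ⊆ {x : X | 0 < ⨅ (δ : ℝ) (_ : 0 < δ), limsup (fun n =>
        ⨆ (ρ : ℝ) (_ : 0 < ρ) (_ : ρ < δ),
          μ n (closedBall x ρ) / ζ (closedBall x ρ)) atTop})
    (Ω : Set X) (hΩ : IsOpen Ω) (hAΩ : A ⊆ Ω)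
    (hsum : ∑' n, μ n Ω < ⊤) :
    caraMeas ζ A = 0 :=
  statement6_general (by norm_num) (fun x _ ↦ ⟨lam, hlamtop,
    eventually_nhdsGT_zero_of_forall_ofReal_lt hγ (hζdbl x)⟩) hA hΩ hAΩ hsum.ne
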